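/- With the special parameter choice 2α_j/α_{j−1} = √((j−1)(N−j+1)) for j = 2,…,N, the squared norms ℋ(n) of the monic MVOPs of the weight W(x) = e^{−x²}L(x)L(x)* satisfy, for every n ≥ 0, the second order recursion 2(n+1)ℋ(n+1)⁻¹ − 2(n+2)ℋ(n+2)⁻¹ℋ(n+1)ℋ(n)⁻¹ + ℋ(n+2)⁻¹Aℋ(n+2)A*ℋ(n)⁻¹ − A*ℋ(n)⁻¹A = 0. -/

import Mathlib

open MeasureTheory Matrix Finset
open scoped ComplexOrder

/-- The physicists' Hermite polynomials, as functions on `ℝ`: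
`H_0 = 1`, `H_1(x) = 2x`, `H_{m+1}(x) = 2x H_m(x) − 2m H_{m−1}(x)`. -/
noncomputable def hermiteF : ℕ → ℝ → ℝ
  | 0, _ => 1
  | 1, x => 2 * x
  | (m + 2), x => 2 * x * hermiteF (m + 1) x - 2 * (m + 1) * hermiteF m x

/-- Entrywise integral of a matrix-valued function on `ℝ`. -/
noncomputable def matInt (N : ℕ) (F : ℝ → Matrix (Fin N) (Fin N) ℂ) :
    Matrix (Fin N) (Fin N) ℂ :=
  Matrix.of fun i j => ∫ y : ℝ, F y i j

/-- Entrywise derivative of a matrix-valued function on `ℝ`. -/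
noncomputable def matDeriv (N : ℕ) (F : ℝ → Matrix (Fin N) (Fin N) ℂ) (x : ℝ) :
    Matrix (Fin N) (Fin N) ℂ :=
  Matrix.of fun i j => deriv (fun y => F y i j) x

/-- `F` is a matrix polynomial of degree `n` with leading coefficient the identity. -/
def IsMonicMatPoly (N n : ℕ) (F : ℝ → Matrix (Fin N) (Fin N) ℂ) : Prop :=
  ∃ c : ℕ → Matrix (Fin N) (Fin N) ℂ, c n = 1 ∧
    ∀ x : ℝ, F x = ∑ k ∈ Finset.range (n + 1), ((x : ℂ) ^ k) • c k

/-- The matrix-valued inner product `⟨H, G⟩ = ∫ H(y) W(y) G(y)* dy`. -/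
noncomputable def matIP (N : ℕ) (W H G : ℝ → Matrix (Fin N) (Fin N) ℂ) :
    Matrix (Fin N) (Fin N) ℂ :=
  matInt N fun y => H y * W y * (G y)ᴴ

/-- The lower triangular matrix `L(x)` with entries
`L(x)_{jk} = (H_{j−k}(x)/(j−k)!)·(α_j/α_k)` for `j ≥ k` (here `0`-based indices). -/
noncomputable def Lmat (N : ℕ) (α : Fin N → ℝ) (x : ℝ) : Matrix (Fin N) (Fin N) ℂ :=
  Matrix.of fun j k =>
    if (k : ℕ) ≤ (j : ℕ) then
      ((hermiteF ((j : ℕ) - (k : ℕ)) x / Nat.factorial ((j : ℕ) - (k : ℕ)) *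
          (α j / α k) : ℝ) : ℂ)
    else 0

/-- The Hermite-type matrix weight `W(x) = e^{−x²} L(x)L(x)*`. -/
noncomputable def hermW (N : ℕ) (α : Fin N → ℝ) (x : ℝ) : Matrix (Fin N) (Fin N) ℂ :=
  Real.exp (-x ^ 2) • (Lmat N α x * (Lmat N α x)ᴴ)

/-- The nilpotent shift matrix `A` with `A_{j,j−1} = 2α_j/α_{j−1}` (1-based), i.e.
(0-based) `A j k = 2 α_j / α_k` when `j = k + 1`. -/
noncomputable def Amat (N : ℕ) (α : Fin N → ℝ) : Matrix (Fin N) (Fin N) ℂ :=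
  Matrix.of fun j k => if (j : ℕ) = (k : ℕ) + 1 then ((2 * α j / α k : ℝ) : ℂ) else 0

/-- The diagonal matrix `J = diag(1, 2, …, N)`. -/
def Jmat (N : ℕ) : Matrix (Fin N) (Fin N) ℂ :=
  Matrix.diagonal fun j => ((j : ℕ) + 1 : ℂ)

/-!
Evaluating the Hermite generating function at `A / 2` gives `L(x) = exp (x A - A² / 4)`, so
`W' = -2xW + AW + WA*`. For the special parameters `A` and `A*` generate a copy of `sl₂`, hence
`L(x)` conjugates `A*` to a polynomial of degree two in `x`: `A W(x) = W(x) K(x)*` with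
`K(x) = K₀ + x K₁ - x² A`. Let `Xₙ` be the coefficient of `xⁿ⁻¹` in `P(·, n)`. Pairing `P(·, n + 1)`
and `P(·, n + 2)` with `P(·, n)` and integrating by parts yields
* `2 ℋ(n + 1) = (n + 1 + Xₙ₊₁ A - A Xₙ₊₁) ℋ(n)`,
* `ℋ(n + 2) A* = ((n + 1) Xₙ₊₂ - (n + 2) Xₙ₊₁) ℋ(n)`.
The commutator of `A` with `(n + 1) Xₙ₊₂ - (n + 2) Xₙ₊₁` can be read off from either relation, and
the recursion is the equality of the two results.
-/

section MomentForm

open Polynomial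

variable {R : Type*} [Ring R] [StarRing R]

/-- The matrix-valued inner product `(F, G) ↦ ∫ F(x) W(x) G(x)* dx`, expressed through the moments
`w k = ∫ x ^ k W(x) dx` so that it makes sense over any star ring. -/
noncomputable def momentForm (w : ℕ → R) : R[X] →+ R[X] →+ R :=
  AddMonoidHom.mk'
    (fun F ↦ AddMonoidHom.mk'
      (fun G ↦ F.sum fun i a ↦ G.sum fun j b ↦ a * w (i + j) * star b)
      fun G₁ G₂ ↦ by
        rw [← Polynomial.sum_add']
        congr! with i a
        exact Polynomial.sum_add_index _ _ _ (fun j ↦ by rw [star_zero, mul_zero])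
          fun j b₁ b₂ ↦ by rw [star_add, mul_add])
    fun F₁ F₂ ↦ by
      refine AddMonoidHom.ext fun G ↦ ?_
      refine Polynomial.sum_add_index F₁ F₂ (fun i a ↦ G.sum fun j b ↦ a * w (i + j) * star b)
        (fun i ↦ ?_) fun i a₁ a₂ ↦ ?_
      · simp only [zero_mul, sum_def, sum_const_zero]
      · simp only [add_mul, sum_def, sum_add_distrib]

variable {w : ℕ → R}

theorem momentForm_monomial_monomial (i j : ℕ) (a b : R) :
    momentForm w (monomial i a) (monomial j b) = a * w (i + j) * star b := by
  simp [momentForm]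

theorem polynomial_induction_on₂ {R : Type*} [Semiring R] {motive : R[X] → R[X] → Prop}
    (F G : R[X])
    (add_left : ∀ F₁ F₂ G, motive F₁ G → motive F₂ G → motive (F₁ + F₂) G)
    (add_right : ∀ F G₁ G₂, motive F G₁ → motive F G₂ → motive F (G₁ + G₂))
    (monomial : ∀ i j a b, motive (monomial i a) (monomial j b)) : motive F G := by
  induction F using Polynomial.induction_on' with
  | add F₁ F₂ h₁ h₂ => exact add_left F₁ F₂ G h₁ h₂
  | monomial i a =>
    induction G using Polynomial.induction_on' with
    | add G₁ G₂ h₁ h₂ => exact add_right _ G₁ G₂ h₁ h₂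
    | monomial j b => exact monomial i j a b

theorem momentForm_C_mul_left (a : R) (F G : R[X]) :
    momentForm w (C a * F) G = a * momentForm w F G := by
  induction F, G using polynomial_induction_on₂ with
  | add_left F₁ F₂ G h₁ h₂ => simp only [mul_add, map_add, AddMonoidHom.add_apply, h₁, h₂]
  | add_right F G₁ G₂ h₁ h₂ => simp only [map_add, mul_add, h₁, h₂]
  | monomial i j b c => simp only [C_mul_monomial, momentForm_monomial_monomial, mul_assoc]

theorem star_momentForm (hw : ∀ k, IsSelfAdjoint (w k)) (F G : R[X]) :
    star (momentForm w F G) = momentForm w G F := by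
  induction F, G using polynomial_induction_on₂ with
  | add_left F₁ F₂ G h₁ h₂ => simp only [map_add, AddMonoidHom.add_apply, star_add, h₁, h₂]
  | add_right F G₁ G₂ h₁ h₂ => simp only [map_add, AddMonoidHom.add_apply, star_add, h₁, h₂]
  | monomial i j a b =>
    simp only [momentForm_monomial_monomial, star_mul, star_star, (hw _).star_eq, mul_assoc,
      add_comm]

-- The truncated `k - 1` is harmless: at `k = 0` it is multiplied by `0`.
theorem momentForm_pearson {a : R}
    (hw : ∀ k, 2 • w (k + 1) = k • w (k - 1) + a * w k + w k * star a) (F G : R[X]) :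
    2 • momentForm w F (X * G) =
      momentForm w (derivative F + F * C a) G + momentForm w F (derivative G + G * C a) := by
  induction F, G using polynomial_induction_on₂ with
  | add_left F₁ F₂ G h₁ h₂ =>
    simp only [map_add, AddMonoidHom.add_apply, add_mul, smul_add] at h₁ h₂ ⊢
    rw [h₁, h₂]
    abel
  | add_right F G₁ G₂ h₁ h₂ =>
    simp only [map_add, AddMonoidHom.add_apply, mul_add, add_mul, smul_add] at h₁ h₂ ⊢
    rw [h₁, h₂]
    abel
  | monomial i j b c =>
    have hsplit : (i + j) • w (i + j - 1) = i • w (i - 1 + j) + j • w (i + (j - 1)) := by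
      rw [add_smul]
      rcases i with _ | i <;> rcases j with _ | j <;> simp [add_comm, add_left_comm]
    have h := congr(b * $(hw (i + j)) * star c)
    rw [hsplit] at h
    simp only [X_mul_monomial, derivative_monomial, ← nsmul_eq_mul', monomial_mul_C, map_add,
      AddMonoidHom.add_apply, momentForm_monomial_monomial, star_mul, star_nsmul, smul_mul_assoc,
      mul_smul_comm, mul_add, add_mul, mul_assoc, ← add_assoc] at h ⊢
    rw [h]
    abel

theorem momentForm_mul_C_adjoint {a c₀ c₁ c₂ : R}
    (hw : ∀ k, a * w k = w k * c₀ + w (k + 1) * c₁ + w (k + 2) * c₂) (F G : R[X]) :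
    momentForm w (F * C a) G =
      momentForm w F (G * C (star c₀) + X * (G * C (star c₁)) + X * (X * (G * C (star c₂)))) := by
  induction F, G using polynomial_induction_on₂ with
  | add_left F₁ F₂ G h₁ h₂ =>
    rw [add_mul, map_add, AddMonoidHom.add_apply, h₁, h₂, ← AddMonoidHom.add_apply, ← map_add]
  | add_right F G₁ G₂ h₁ h₂ =>
    rw [map_add, h₁, h₂, ← map_add]
    simp only [add_mul, mul_add]
    abel_nf
  | monomial i j b c =>
    simp only [map_add, X_mul_monomial, monomial_mul_C, momentForm_monomial_monomial, star_mul,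
      star_star, ← add_assoc]
    rw [mul_assoc b, hw]
    noncomm_ring

theorem recursion_of_subleading_relations {R : Type*} [Ring R]
    {a b h₀ h₁ h₂ k₀ k₁ k₂ x₁ x₂ : R} {n : ℕ} (hk₀ : h₀ * k₀ = 1) (hk₁ : h₁ * k₁ = 1)
    (hk₂ : k₂ * h₂ = 1) (h₁₀ : 2 • h₁ = ((n + 1) • 1 + x₁ * a - a * x₁) * h₀)
    (h₂₁ : 2 • h₂ = ((n + 2) • 1 + x₂ * a - a * x₂) * h₁)
    (h₂₀ : h₂ * b = ((n + 1) • x₂ - (n + 2) • x₁) * h₀) :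
    (2 * (n + 1)) • k₁ - (2 * (n + 2)) • (k₂ * h₁ * k₀) + k₂ * a * h₂ * b * k₀ -
      b * k₀ * a = 0 := by
  have hy : h₂ * b * k₀ = (n + 1) • x₂ - (n + 2) • x₁ := by
    rw [h₂₀, mul_assoc, hk₀, mul_one]
  have hy₁ : 2 • (h₁ * k₀) = (n + 1) • 1 + x₁ * a - a * x₁ := by
    rw [← smul_mul_assoc, h₁₀, mul_assoc, hk₀, mul_one]
  have hy₂ : 2 • (h₂ * k₁) = (n + 2) • 1 + x₂ * a - a * x₂ := by
    rw [← smul_mul_assoc, h₂₁, mul_assoc, hk₁, mul_one]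
  have key : (n + 1) • 2 • (h₂ * k₁) - (n + 2) • 2 • (h₁ * k₀) + a * (h₂ * b * k₀) -
      h₂ * b * k₀ * a = 0 := by
    rw [hy, hy₁, hy₂]
    simp only [mul_sub, sub_mul, smul_add, smul_sub, mul_smul_comm, smul_mul_assoc, smul_smul,
      mul_comm (n + 1)]
    abel
  have := congr(k₂ * $key)
  simp only [mul_sub, mul_add, mul_zero, mul_smul_comm, ← mul_assoc, hk₂, one_mul] at this
  simpa only [smul_smul, mul_comm 2] using this

/-- A sequence of monic matrix polynomials, orthogonal for the moment sequence `w`. The leading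
coefficient is prescribed through `coeff`, so that the trivial ring is not excluded. -/
structure IsMonicOrthogonal (w : ℕ → R) (p : ℕ → R[X]) : Prop where
  natDegree_le : ∀ n, (p n).natDegree ≤ n
  coeff_self : ∀ n, (p n).coeff n = 1
  orthogonal : ∀ n m, n ≠ m → momentForm w (p n) (p m) = 0

/-- The squared norm `ℋ(n) = ⟨p n, p n⟩`. -/
noncomputable def sqNorm (w : ℕ → R) (p : ℕ → R[X]) (n : ℕ) : R :=
  momentForm w (p n) (p n)

namespace IsMonicOrthogonal

variable {p : ℕ → R[X]}

theorem coeff_of_lt (hp : IsMonicOrthogonal w p) {n m : ℕ} (h : n < m) : (p n).coeff m = 0 :=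
  coeff_eq_zero_of_natDegree_lt ((hp.natDegree_le n).trans_lt h)

theorem natDegree_X_mul_le (hp : IsMonicOrthogonal w p) (n : ℕ) :
    (X * p n).natDegree ≤ n + 1 := by
  rw [add_comm]
  exact natDegree_mul_le_of_le natDegree_X_le (hp.natDegree_le n)

theorem degree_sub_lt (hp : IsMonicOrthogonal w p) {n : ℕ} {F : R[X]} (hF : F.natDegree ≤ n) :
    (F - C (F.coeff n) * p n).degree < n := by
  refine (degree_lt_iff_coeff_zero _ _).2 fun m hm ↦ ?_
  rw [coeff_sub, coeff_C_mul]
  rcases hm.eq_or_lt with rfl | hm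
  · rw [hp.coeff_self, mul_one, sub_self]
  · rw [coeff_eq_zero_of_natDegree_lt (hF.trans_lt hm), hp.coeff_of_lt hm, mul_zero, sub_zero]

theorem momentForm_eq_zero (hp : IsMonicOrthogonal w p) {n : ℕ} {F : R[X]} (hF : F.degree < n) :
    momentForm w F (p n) = 0 := by
  suffices ∀ k ≤ n, ∀ F : R[X], F.degree < k → momentForm w F (p n) = 0 from
    this n le_rfl F hF
  intro k
  induction k with
  | zero =>
    intro _ F hF
    rw [degree_eq_bot.1 (Nat.WithBot.lt_zero_iff.1 hF), map_zero, AddMonoidHom.zero_apply]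
  | succ k ih =>
    intro hk F hF
    have hF' : F.natDegree ≤ k := natDegree_le_of_degree_le (Order.lt_succ_iff.1 hF)
    have h := ih (by omega) _ (hp.degree_sub_lt hF')
    rwa [map_sub, AddMonoidHom.sub_apply, momentForm_C_mul_left, hp.orthogonal k n (by omega),
      mul_zero, sub_zero] at h

theorem momentForm_eq_coeff_mul (hp : IsMonicOrthogonal w p) {n : ℕ} {F : R[X]}
    (hF : F.natDegree ≤ n) : momentForm w F (p n) = F.coeff n * sqNorm w p n := by
  have h := hp.momentForm_eq_zero (hp.degree_sub_lt hF)
  rwa [map_sub, AddMonoidHom.sub_apply, momentForm_C_mul_left, sub_eq_zero] at h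

theorem momentForm_eq_zero_right (hp : IsMonicOrthogonal w p) (hw : ∀ k, IsSelfAdjoint (w k))
    {n : ℕ} {G : R[X]} (hG : G.natDegree < n) : momentForm w (p n) G = 0 := by
  have hG' : G.degree < n := degree_le_natDegree.trans_lt (Nat.cast_lt.2 hG)
  rw [← star_momentForm hw, hp.momentForm_eq_zero hG', star_zero]

theorem momentForm_eq_mul_star_coeff (hp : IsMonicOrthogonal w p)
    (hw : ∀ k, IsSelfAdjoint (w k)) {n : ℕ} {G : R[X]} (hG : G.natDegree ≤ n) :
    momentForm w (p n) G = sqNorm w p n * star (G.coeff n) := by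
  rw [← star_momentForm hw, hp.momentForm_eq_coeff_mul hG, star_mul, sqNorm, star_momentForm hw]

variable {a : R}

theorem momentForm_pearson_of_lt (hp : IsMonicOrthogonal w p) (hw : ∀ k, IsSelfAdjoint (w k))
    (hpearson : ∀ k, 2 • w (k + 1) = k • w (k - 1) + a * w k + w k * star a) {m n : ℕ}
    (hmn : m < n) :
    2 • momentForm w (p n) (X * p m) = momentForm w (derivative (p n) + p n * C a) (p m) := by
  have hdeg : (derivative (p m) + p m * C a).natDegree ≤ m := by
    refine natDegree_le_iff_coeff_eq_zero.2 fun k hk ↦ ?_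
    rw [coeff_add, coeff_derivative, coeff_mul_C, hp.coeff_of_lt hk, hp.coeff_of_lt (by omega),
      zero_mul, zero_mul, add_zero]
  rw [momentForm_pearson hpearson, hp.momentForm_eq_zero_right hw (hdeg.trans_lt hmn), add_zero]

theorem two_nsmul_sqNorm_succ (hp : IsMonicOrthogonal w p) (hw : ∀ k, IsSelfAdjoint (w k))
    (hpearson : ∀ k, 2 • w (k + 1) = k • w (k - 1) + a * w k + w k * star a) (n : ℕ) :
    2 • sqNorm w p (n + 1) =
      ((n + 1) • 1 + (p (n + 1)).coeff n * a - a * (p (n + 1)).coeff n) * sqNorm w p n := by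
  set F := derivative (p (n + 1)) + p (n + 1) * C a - C a * p (n + 1) with hF
  have hdeg : F.natDegree ≤ n := by
    refine natDegree_le_iff_coeff_eq_zero.2 fun k hk ↦ ?_
    simp only [hF, coeff_sub, coeff_add, coeff_derivative, coeff_mul_C, coeff_C_mul,
      hp.coeff_of_lt (Nat.succ_lt_succ hk), zero_mul, zero_add]
    rcases (Nat.succ_le_of_lt hk).eq_or_lt with rfl | hk
    · rw [hp.coeff_self, one_mul, mul_one, sub_self]
    · rw [hp.coeff_of_lt hk, zero_mul, mul_zero, sub_zero]
  have hcoeff : F.coeff n = (n + 1) • 1 + (p (n + 1)).coeff n * a - a * (p (n + 1)).coeff n := by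
    simp [hF, coeff_derivative, hp.coeff_self]
  calc 2 • sqNorm w p (n + 1) = 2 • momentForm w (p (n + 1)) (X * p n) := by
        rw [hp.momentForm_eq_mul_star_coeff hw (hp.natDegree_X_mul_le n), coeff_X_mul,
          hp.coeff_self, star_one, mul_one]
    _ = momentForm w (F + C a * p (n + 1)) (p n) := by
        rw [hp.momentForm_pearson_of_lt hw hpearson n.lt_succ_self, hF, sub_add_cancel]
    _ = _ := by
        rw [map_add, AddMonoidHom.add_apply, momentForm_C_mul_left,
          hp.orthogonal _ _ n.succ_ne_self, mul_zero, add_zero, hp.momentForm_eq_coeff_mul hdeg,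
          hcoeff]

theorem momentForm_mul_C_add_two {c₀ c₁ : R} (hp : IsMonicOrthogonal w p)
    (hw : ∀ k, IsSelfAdjoint (w k))
    (hadj : ∀ k, a * w k = w k * c₀ + w (k + 1) * c₁ + w (k + 2) * -star a) (n : ℕ) :
    momentForm w (p (n + 2) * C a) (p n) = -(sqNorm w p (n + 2) * star a) := by
  set G := p n * C (star c₀) + X * (p n * C (star c₁)) + X * (X * (p n * C (-a))) with hG
  have hdeg : G.natDegree ≤ n + 2 := by
    refine natDegree_le_iff_coeff_eq_zero.2 fun k hk ↦ ?_
    obtain ⟨k, rfl⟩ : ∃ l, k = l + 2 := ⟨k - 2, by omega⟩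
    simp only [hG, coeff_add, coeff_X_mul, coeff_mul_C, hp.coeff_of_lt (show n < k by omega),
      hp.coeff_of_lt (show n < k + 1 by omega), hp.coeff_of_lt (show n < k + 2 by omega),
      zero_mul, add_zero]
  have hcoeff : G.coeff (n + 2) = -a := by
    simp [hG, hp.coeff_self, hp.coeff_of_lt]
  rw [momentForm_mul_C_adjoint hadj, star_neg, star_star,
    hp.momentForm_eq_mul_star_coeff hw hdeg, hcoeff, star_neg, mul_neg]

theorem momentForm_derivative_add_two (hp : IsMonicOrthogonal w p) (n : ℕ) :
    momentForm w (derivative (p (n + 2))) (p n) =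
      ((n + 1) • (p (n + 2)).coeff (n + 1) - (n + 2) • (p (n + 1)).coeff n) * sqNorm w p n := by
  set F := derivative (p (n + 2)) - (n + 2) • p (n + 1) with hF
  have hdeg : F.natDegree ≤ n := by
    refine natDegree_le_iff_coeff_eq_zero.2 fun k hk ↦ ?_
    rw [hF, coeff_sub, coeff_derivative, coeff_smul]
    rcases (Nat.succ_le_of_lt hk).eq_or_lt with rfl | hk
    · rw [hp.coeff_self, hp.coeff_self, ← Nat.cast_succ, ← nsmul_eq_mul', sub_self]
    · rw [hp.coeff_of_lt hk, hp.coeff_of_lt (Nat.succ_lt_succ hk), zero_mul, smul_zero, sub_zero]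
  have hcoeff :
      F.coeff n = (n + 1) • (p (n + 2)).coeff (n + 1) - (n + 2) • (p (n + 1)).coeff n := by
    rw [hF, coeff_sub, coeff_derivative, coeff_smul, ← Nat.cast_succ, ← nsmul_eq_mul']
  rw [← hcoeff, ← hp.momentForm_eq_coeff_mul hdeg, hF, map_sub, AddMonoidHom.sub_apply, map_nsmul,
    AddMonoidHom.nsmul_apply, hp.orthogonal _ _ n.succ_ne_self, smul_zero, sub_zero]

theorem sqNorm_add_two_mul_star {c₀ c₁ : R} (hp : IsMonicOrthogonal w p)
    (hw : ∀ k, IsSelfAdjoint (w k))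
    (hpearson : ∀ k, 2 • w (k + 1) = k • w (k - 1) + a * w k + w k * star a)
    (hadj : ∀ k, a * w k = w k * c₀ + w (k + 1) * c₁ + w (k + 2) * -star a) (n : ℕ) :
    sqNorm w p (n + 2) * star a =
      ((n + 1) • (p (n + 2)).coeff (n + 1) - (n + 2) • (p (n + 1)).coeff n) * sqNorm w p n := by
  have h := hp.momentForm_pearson_of_lt hw hpearson (show n < n + 2 by omega)
  rw [map_add, AddMonoidHom.add_apply, hp.momentForm_mul_C_add_two hw hadj,
    hp.momentForm_eq_zero_right hw (Nat.lt_succ_of_le (hp.natDegree_X_mul_le n)), smul_zero,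
    ← sub_eq_add_neg, eq_comm, sub_eq_zero] at h
  rw [← h, hp.momentForm_derivative_add_two]

theorem sqNorm_recursion {c₀ c₁ : R} (hp : IsMonicOrthogonal w p)
    (hw : ∀ k, IsSelfAdjoint (w k))
    (hpearson : ∀ k, 2 • w (k + 1) = k • w (k - 1) + a * w k + w k * star a)
    (hadj : ∀ k, a * w k = w k * c₀ + w (k + 1) * c₁ + w (k + 2) * -star a) (n : ℕ)
    {k₀ k₁ k₂ : R} (hk₀ : sqNorm w p n * k₀ = 1) (hk₁ : sqNorm w p (n + 1) * k₁ = 1)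
    (hk₂ : k₂ * sqNorm w p (n + 2) = 1) :
    (2 * (n + 1)) • k₁ - (2 * (n + 2)) • (k₂ * sqNorm w p (n + 1) * k₀) +
      k₂ * a * sqNorm w p (n + 2) * star a * k₀ - star a * k₀ * a = 0 :=
  recursion_of_subleading_relations hk₀ hk₁ hk₂ (hp.two_nsmul_sqNorm_succ hw hpearson n)
    (hp.two_nsmul_sqNorm_succ hw hpearson (n + 1))
    (hp.sqNorm_add_two_mul_star hw hpearson hadj n)

end IsMonicOrthogonal

end MomentForm

section Moments

variable {R : Type*} [NormedRing R] [NormedAlgebra ℝ R] {W : ℝ → R}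

/-- The moments `∫ x ^ k W(x) dx` of an algebra-valued weight on `ℝ`. -/
noncomputable def moment (W : ℝ → R) (k : ℕ) : R :=
  ∫ x : ℝ, x ^ k • W x

theorem two_nsmul_moment_succ {a b : R} (hint : ∀ k, Integrable fun x : ℝ ↦ x ^ k • W x)
    (hderiv : ∀ x, HasDerivAt W (-(2 * x) • W x + a * W x + W x * b) x) (k : ℕ) :
    2 • moment W (k + 1) = k • moment W (k - 1) + a * moment W k + moment W k * b := by
  have hderiv' (x : ℝ) : HasDerivAt (fun x ↦ x ^ k • W x)
      ((k : ℝ) • x ^ (k - 1) • W x + (-2 : ℝ) • x ^ (k + 1) • W x + a * (x ^ k • W x) +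
        x ^ k • W x * b) x := by
    refine ((hasDerivAt_pow k x).smul (hderiv x)).congr_deriv ?_
    rw [mul_smul_comm, smul_mul_assoc]
    module
  have h₁ : Integrable fun x : ℝ ↦ (k : ℝ) • x ^ (k - 1) • W x := (hint _).fun_smul _
  have h₂ : Integrable fun x : ℝ ↦ (-2 : ℝ) • x ^ (k + 1) • W x := (hint _).fun_smul _
  have h₃ : Integrable fun x : ℝ ↦ a * (x ^ k • W x) := (hint k).const_mul a
  have h₄ : Integrable fun x : ℝ ↦ x ^ k • W x * b := (hint k).mul_const b
  have h := integral_eq_zero_of_hasDerivAt_of_integrable hderiv'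
    (((h₁.fun_add h₂).fun_add h₃).fun_add h₄) (hint k)
  rw [integral_add ((h₁.fun_add h₂).fun_add h₃) h₄,
    integral_add (h₁.fun_add h₂) h₃,
    integral_add h₁ h₂, integral_smul, integral_smul, integral_const_mul_of_integrable (hint k),
    integral_mul_const_of_integrable (hint k), Nat.cast_smul_eq_nsmul, neg_smul,
    ofNat_smul_eq_nsmul] at h
  rw [← sub_eq_zero, ← neg_eq_zero, ← h]
  simp only [moment]
  abel

theorem mul_moment {a c₀ c₁ c₂ : R} (hint : ∀ k, Integrable fun x : ℝ ↦ x ^ k • W x)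
    (h : ∀ x, a * W x = W x * c₀ + x • (W x * c₁) + x ^ 2 • (W x * c₂)) (k : ℕ) :
    a * moment W k = moment W k * c₀ + moment W (k + 1) * c₁ + moment W (k + 2) * c₂ := by
  simp only [moment]
  rw [← integral_const_mul_of_integrable (hint k), ← integral_mul_const_of_integrable (hint k),
    ← integral_mul_const_of_integrable (hint _), ← integral_mul_const_of_integrable (hint _),
    ← integral_add ((hint k).mul_const _) ((hint _).mul_const _),
    ← integral_add (((hint k).mul_const _).fun_add ((hint _).mul_const _))
      ((hint _).mul_const _)]
  congr with x
  rw [mul_smul_comm, h]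
  simp only [smul_add, smul_smul, smul_mul_assoc, pow_add, pow_one]

variable [StarRing R] [StarModule ℝ R]

theorem isSelfAdjoint_moment [ContinuousStar R] (hW : ∀ x, IsSelfAdjoint (W x)) (k : ℕ) :
    IsSelfAdjoint (moment W k) := by
  rw [isSelfAdjoint_iff, moment, ← starL'_apply ℝ, ← ContinuousLinearEquiv.integral_comp_comm]
  simp only [starL'_apply, star_smul, star_trivial, (hW _).star_eq]

open Polynomial

theorem monomial_eval_mul_mul_star (i j : ℕ) (a b : R) (x : ℝ) :
    (monomial i a).eval (algebraMap ℝ R x) * W x * star ((monomial j b).eval (algebraMap ℝ R x)) =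
      a * (x ^ (i + j) • W x) * star b := by
  rw [eval_monomial, eval_monomial, ← map_pow, ← map_pow, ← Algebra.commutes, ← Algebra.commutes,
    ← Algebra.smul_def, ← Algebra.smul_def, star_smul, star_trivial, pow_add]
  simp only [smul_mul_assoc, mul_smul_comm, smul_smul, mul_comm]

theorem integrable_eval_mul_mul_star_eval (hint : ∀ k, Integrable fun x : ℝ ↦ x ^ k • W x)
    (F G : R[X]) :
    Integrable fun x : ℝ ↦
      F.eval (algebraMap ℝ R x) * W x * star (G.eval (algebraMap ℝ R x)) := by
  induction F, G using polynomial_induction_on₂ with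
  | add_left F₁ F₂ G h₁ h₂ => simpa only [eval_add, add_mul] using h₁.fun_add h₂
  | add_right F G₁ G₂ h₁ h₂ => simpa only [eval_add, star_add, mul_add] using h₁.fun_add h₂
  | monomial i j a b =>
    simpa only [monomial_eval_mul_mul_star] using ((hint (i + j)).const_mul a).mul_const (star b)

theorem integral_eval_mul_mul_star_eval (hint : ∀ k, Integrable fun x : ℝ ↦ x ^ k • W x)
    (F G : R[X]) :
    ∫ x : ℝ, F.eval (algebraMap ℝ R x) * W x * star (G.eval (algebraMap ℝ R x)) =
      momentForm (moment W) F G := by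
  induction F, G using polynomial_induction_on₂ with
  | add_left F₁ F₂ G h₁ h₂ =>
    simp only [eval_add, add_mul, map_add, AddMonoidHom.add_apply, ← h₁, ← h₂]
    exact integral_add (integrable_eval_mul_mul_star_eval hint _ _)
      (integrable_eval_mul_mul_star_eval hint _ _)
  | add_right F G₁ G₂ h₁ h₂ =>
    simp only [eval_add, star_add, mul_add, map_add, ← h₁, ← h₂]
    exact integral_add (integrable_eval_mul_mul_star_eval hint _ _)
      (integrable_eval_mul_mul_star_eval hint _ _)
  | monomial i j a b =>
    simp only [monomial_eval_mul_mul_star, momentForm_monomial_monomial]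
    rw [integral_mul_const_of_integrable ((hint _).const_mul a),
      integral_const_mul_of_integrable (hint _), moment]

end Moments

section NilpotentEval

open PowerSeries

variable {k R : Type*} [CommRing k] [Ring R] [Algebra k R] {a : R} {M : ℕ}

theorem aeval_trunc_coe (ha : a ^ M = 0) (p : Polynomial k) :
    Polynomial.aeval a (trunc M (p : k⟦X⟧)) = Polynomial.aeval a p := by
  obtain ⟨q, hq⟩ : Polynomial.X ^ M ∣ p - trunc M (p : k⟦X⟧) := by
    refine Polynomial.X_pow_dvd_iff.2 fun d hd ↦ ?_
    rw [Polynomial.coeff_sub, coeff_trunc, if_pos hd, Polynomial.coeff_coe, sub_self]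
  rw [eq_comm, ← sub_eq_zero, ← map_sub, hq, map_mul, map_pow, Polynomial.aeval_X, ha, zero_mul]

/-- Evaluation of formal power series at a nilpotent element, a stand-in for the analytic functional
calculus; the exponent `M` is only a truncation order and does not affect the value. -/
noncomputable def nilpotentEval (ha : a ^ M = 0) : k⟦X⟧ →ₐ[k] R :=
  AlgHom.ofLinearMap ((Polynomial.aeval a).toLinearMap ∘ₗ trunc M)
    (by simpa using aeval_trunc_coe ha (1 : Polynomial k))
    (fun f g ↦ by
      simp only [LinearMap.comp_apply, AlgHom.toLinearMap_apply]
      rw [← trunc_trunc_mul_trunc, ← Polynomial.coe_mul, aeval_trunc_coe ha, map_mul])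

theorem nilpotentEval_apply (ha : a ^ M = 0) (f : k⟦X⟧) :
    nilpotentEval ha f = Polynomial.aeval a (trunc M f) := rfl

theorem nilpotentEval_eq_sum (ha : a ^ M = 0) (f : k⟦X⟧) :
    nilpotentEval ha f = ∑ m ∈ range M, coeff m f • a ^ m := by
  simp only [nilpotentEval_apply, Polynomial.aeval_def, eval₂_trunc_eq_sum_range, Algebra.smul_def]

theorem nilpotentEval_X (ha : a ^ M = 0) : nilpotentEval ha (X : k⟦X⟧) = a := by
  rw [← Polynomial.coe_X, nilpotentEval_apply, aeval_trunc_coe ha, Polynomial.aeval_X]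

theorem aeval_trunc_of_le (ha : a ^ M = 0) {n : ℕ} (hn : M ≤ n) (f : k⟦X⟧) :
    Polynomial.aeval a (trunc n f) = nilpotentEval ha f := by
  rw [← aeval_trunc_coe ha, trunc_trunc_of_le f hn, nilpotentEval_apply]

theorem nilpotentEval_commute (ha : a ^ M = 0) (f : k⟦X⟧) : Commute a (nilpotentEval ha f) := by
  simpa only [nilpotentEval_X] using (Commute.all X f).map (nilpotentEval ha)

variable {d h : R}

theorem aeval_mul_of_sl2 (had : a * d - d * a = h) (hha : h * a - a * h = 2 * a)
    (p : Polynomial k) :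
    Polynomial.aeval a p * d = d * Polynomial.aeval a p +
      h * Polynomial.aeval a (Polynomial.derivative p) -
      a * Polynomial.aeval a (Polynomial.derivative^[2] p) := by
  simp only [Function.iterate_succ, Function.iterate_zero, Function.comp_apply, id_eq]
  induction p using Polynomial.induction_on with
  | C c => simp [Algebra.commutes]
  | add p q hp hq =>
    simp only [map_add, add_mul, mul_add, hp, hq]
    abel
  | monomial n c hp =>
    rw [pow_succ', mul_left_comm]
    set q := Polynomial.C c * Polynomial.X ^ n
    simp only [Polynomial.derivative_mul, Polynomial.derivative_X, one_mul, map_add, map_mul,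
      Polynomial.aeval_X]
    have had' : a * d = d * a + h := by rw [← had]; abel
    have hah' : a * h = h * a - 2 * a := by rw [← hha]; abel
    rw [mul_assoc, hp]
    simp only [mul_add, mul_sub, ← mul_assoc, had', hah']
    noncomm_ring

theorem nilpotentEval_mul_of_sl2 (had : a * d - d * a = h) (hha : h * a - a * h = 2 * a)
    (ha : a ^ M = 0) (f : k⟦X⟧) :
    nilpotentEval ha f * d = d * nilpotentEval ha f + h * nilpotentEval ha (d⁄dX k f) -
      a * nilpotentEval ha (d⁄dX k (d⁄dX k f)) := by
  have key := aeval_mul_of_sl2 had hha (trunc (M + 1 + 1) f)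
  rwa [Function.iterate_succ_apply, Function.iterate_one, ← trunc_derivative, ← trunc_derivative,
    aeval_trunc_of_le ha (by omega), aeval_trunc_of_le ha (by omega),
    aeval_trunc_of_le ha le_rfl] at key

end NilpotentEval

section Hermite

open PowerSeries

/-- The Hermite generating function `∑ H_m(x) / m! (t / 2)^m = exp (x t - t² / 4)`, as a power
series in `t`. -/
noncomputable def hermiteSeries (x : ℝ) : ℝ⟦X⟧ :=
  mk fun m ↦ hermiteF m x / (2 ^ m * m.factorial)

theorem coeff_hermiteSeries_add_two (x : ℝ) (m : ℕ) :
    coeff (m + 2) (hermiteSeries x) * (m + 2) =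
      x * coeff (m + 1) (hermiteSeries x) - coeff m (hermiteSeries x) / 2 := by
  simp only [hermiteSeries, coeff_mk, hermiteF, Nat.factorial_succ, pow_succ]
  push_cast
  field_simp
  ring

theorem derivative_hermiteSeries (x : ℝ) :
    d⁄dX ℝ (hermiteSeries x) = x • hermiteSeries x - (1 / 2 : ℝ) • (X * hermiteSeries x) := by
  ext (_ | m)
  · simp [hermiteSeries, coeff_derivative, hermiteF]
  · rw [coeff_derivative, map_sub, coeff_smul, coeff_smul, coeff_succ_X_mul, smul_eq_mul,
      smul_eq_mul]
    push_cast
    linear_combination coeff_hermiteSeries_add_two x m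

theorem derivative_derivative_hermiteSeries (x : ℝ) :
    d⁄dX ℝ (d⁄dX ℝ (hermiteSeries x)) = x • d⁄dX ℝ (hermiteSeries x) -
      (1 / 2 : ℝ) • (X * d⁄dX ℝ (hermiteSeries x) + hermiteSeries x) := by
  conv_lhs => rw [derivative_hermiteSeries]
  rw [map_sub, Derivation.map_smul, Derivation.map_smul, Derivation.leibniz, derivative_X,
    smul_eq_mul, smul_eq_mul, mul_one]

theorem hasDerivAt_hermiteF_succ (m : ℕ) (x : ℝ) :
    HasDerivAt (hermiteF (m + 1)) (2 * (m + 1) * hermiteF m x) x := by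
  induction m using Nat.twoStepInduction with
  | zero =>
    simpa [hermiteF] using (hasDerivAt_id x).const_mul 2
  | one =>
    simp only [hermiteF]
    refine (((hasDerivAt_id x).const_mul 2).mul ((hasDerivAt_id x).const_mul 2)).sub_const _
      |>.congr_deriv ?_
    simp only [id_eq]
    ring
  | more m h₁ h₂ =>
    refine ((((hasDerivAt_id x).const_mul 2).mul h₂).sub
      (h₁.const_mul (2 * ((m + 1 : ℕ) + 1 : ℝ)))).congr_deriv ?_
    simp only [id_eq, hermiteF]
    push_cast
    ring

theorem hasDerivAt_coeff_hermiteSeries (m : ℕ) (x : ℝ) :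
    HasDerivAt (fun x ↦ coeff m (hermiteSeries x)) (coeff m (X * hermiteSeries x)) x := by
  rcases m with _ | m
  · simpa [hermiteSeries, hermiteF] using hasDerivAt_const x (1 : ℝ)
  · rw [coeff_succ_X_mul]
    simp only [hermiteSeries, coeff_mk]
    refine ((hasDerivAt_hermiteF_succ m x).div_const _).congr_deriv ?_
    rw [Nat.factorial_succ]
    push_cast
    field_simp
    ring

theorem exists_polynomial_hermiteF (m : ℕ) : ∃ q : Polynomial ℝ, ∀ x, hermiteF m x = q.eval x := by
  induction m using Nat.twoStepInduction with
  | zero => exact ⟨1, by simp [hermiteF]⟩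
  | one => exact ⟨2 * .X, by simp [hermiteF]⟩
  | more m h₁ h₂ =>
    obtain ⟨q₁, hq₁⟩ := h₁
    obtain ⟨q₂, hq₂⟩ := h₂
    exact ⟨2 * .X * q₂ - 2 * (m + 1) * q₁, by simp [hermiteF, hq₁, hq₂]⟩

end Hermite

section HermiteWeight

open PowerSeries

variable {R : Type*} [NormedRing R] [NormedAlgebra ℝ R] {a : R} {M : ℕ}

theorem hasDerivAt_nilpotentEval_hermiteSeries (ha : a ^ M = 0) (x : ℝ) :
    HasDerivAt (fun x ↦ nilpotentEval ha (hermiteSeries x))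
      (a * nilpotentEval ha (hermiteSeries x)) x := by
  have h : a * nilpotentEval ha (hermiteSeries x) = nilpotentEval ha (X * hermiteSeries x) := by
    rw [map_mul, nilpotentEval_X]
  rw [h]
  simp only [nilpotentEval_eq_sum]
  exact HasDerivAt.fun_sum fun m _ ↦ (hasDerivAt_coeff_hermiteSeries m x).smul_const (a ^ m)

theorem exists_polynomial_nilpotentEval_hermiteSeries (ha : a ^ M = 0) :
    ∃ F : Polynomial R, ∀ x : ℝ,
      nilpotentEval ha (hermiteSeries x) = F.eval (algebraMap ℝ R x) := by
  choose q hq using exists_polynomial_hermiteF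
  refine ⟨∑ m ∈ range M, Polynomial.C (a ^ m) *
    (Polynomial.C (2 ^ m * m.factorial : ℝ)⁻¹ * q m).map (algebraMap ℝ R), fun x ↦ ?_⟩
  simp only [nilpotentEval_eq_sum, hermiteSeries, coeff_mk, hq, Polynomial.eval_finsetSum,
    Polynomial.eval_C_mul, Polynomial.eval_map_algebraMap, Polynomial.aeval_algebraMap_apply,
    Polynomial.eval_mul, Polynomial.eval_C, ← Algebra.commutes, ← Algebra.smul_def,
    Polynomial.coe_aeval_eq_eval, div_eq_inv_mul]

theorem nilpotentEval_hermiteSeries_mul_of_sl2 {d h : R} (ha : a ^ M = 0)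
    (had : a * d - d * a = h) (hha : h * a - a * h = 2 * a) (x : ℝ) :
    nilpotentEval ha (hermiteSeries x) * d =
      (d - (1 / 2 : ℝ) • (h * a) + (1 / 2 : ℝ) • a - (1 / 4 : ℝ) • a ^ 3 + x • (h + a ^ 2) -
        x ^ 2 • a) *
        nilpotentEval ha (hermiteSeries x) := by
  rw [nilpotentEval_mul_of_sl2 had hha, derivative_derivative_hermiteSeries,
    derivative_hermiteSeries]
  simp only [map_sub, map_smul, map_add, map_mul, nilpotentEval_X, mul_sub, mul_add,
    sub_mul, add_mul, mul_smul_comm, smul_mul_assoc, ← mul_assoc, pow_succ, pow_zero, one_mul]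
  module

theorem integrable_pow_smul_exp_neg_sq (k : ℕ) (b : R) :
    Integrable fun x : ℝ ↦ x ^ k • Real.exp (-x ^ 2) • b := by
  have h := integrable_rpow_mul_exp_neg_mul_sq one_pos (neg_one_lt_zero.trans_le k.cast_nonneg)
  simpa [smul_smul] using h.smul_const b

variable [StarRing R] [StarModule ℝ R]

/-- The weight `W(x) = e^{-x²} L(x) L(x)*` with `L(x) = exp (x a - a² / 4)`, for a nilpotent `a`. -/
noncomputable def hermiteWeight (ha : a ^ M = 0) (x : ℝ) : R :=
  Real.exp (-x ^ 2) •
    (nilpotentEval ha (hermiteSeries x) * star (nilpotentEval ha (hermiteSeries x)))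

theorem isSelfAdjoint_hermiteWeight (ha : a ^ M = 0) (x : ℝ) :
    IsSelfAdjoint (hermiteWeight ha x) :=
  (IsSelfAdjoint.all _).smul (IsSelfAdjoint.mul_star_self _)

theorem hasDerivAt_hermiteWeight [ContinuousStar R] (ha : a ^ M = 0) (x : ℝ) :
    HasDerivAt (hermiteWeight ha)
      (-(2 * x) • hermiteWeight ha x + a * hermiteWeight ha x + hermiteWeight ha x * star a) x := by
  have hL := hasDerivAt_nilpotentEval_hermiteSeries ha x
  have hexp : HasDerivAt (fun x : ℝ ↦ Real.exp (-x ^ 2)) (Real.exp (-x ^ 2) * -(2 * x)) x := by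
    simpa using (hasDerivAt_pow 2 x).neg.exp
  refine (hexp.smul (hL.mul hL.star)).congr_deriv ?_
  simp only [hermiteWeight, star_mul, mul_smul_comm, smul_mul_assoc, mul_assoc]
  module

theorem integrable_pow_smul_hermiteWeight (ha : a ^ M = 0) (k : ℕ) :
    Integrable fun x : ℝ ↦ x ^ k • hermiteWeight ha x := by
  obtain ⟨F, hF⟩ := exists_polynomial_nilpotentEval_hermiteSeries ha
  have h := integrable_eval_mul_mul_star_eval (fun k ↦ integrable_pow_smul_exp_neg_sq k (1 : R))
    (F * Polynomial.X ^ k) F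
  refine h.congr (.of_forall fun x ↦ ?_)
  simp only [hermiteWeight, hF, Polynomial.eval_mul_X_pow]
  simp only [mul_smul_comm, smul_mul_assoc, mul_one]
  rw [← map_pow, ← Algebra.commutes, ← Algebra.smul_def, smul_mul_assoc, smul_comm]

theorem mul_hermiteWeight_of_sl2 {h : R} (ha : a ^ M = 0) (had : a * star a - star a * a = h)
    (hha : h * a - a * h = 2 * a) (x : ℝ) :
    a * hermiteWeight ha x =
      hermiteWeight ha x *
          star (star a - (1 / 2 : ℝ) • (h * a) + (1 / 2 : ℝ) • a - (1 / 4 : ℝ) • a ^ 3) +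
        x • (hermiteWeight ha x * star (h + a ^ 2)) +
        x ^ 2 • (hermiteWeight ha x * -star a) := by
  set L := nilpotentEval ha (hermiteSeries x)
  calc a * hermiteWeight ha x = Real.exp (-x ^ 2) • (L * star (L * star a)) := by
        rw [hermiteWeight, mul_smul_comm, ← mul_assoc, (nilpotentEval_commute ha _).eq, star_mul,
          star_star, mul_assoc]
    _ = _ := by
        rw [nilpotentEval_hermiteSeries_mul_of_sl2 ha had hha x]
        simp only [hermiteWeight, star_mul, star_add, star_sub, star_smul, star_trivial, mul_add,
          mul_sub, mul_smul_comm, smul_mul_assoc, mul_assoc, mul_neg]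
        module

theorem IsMonicOrthogonal.hermiteWeight_sqNorm_recursion [ContinuousStar R] {h : R} (ha : a ^ M = 0)
    (had : a * star a - star a * a = h) (hha : h * a - a * h = 2 * a) {p : ℕ → Polynomial R}
    (hp : IsMonicOrthogonal (moment (hermiteWeight ha)) p) (n : ℕ) {k₀ k₁ k₂ : R}
    (hk₀ : sqNorm (moment (hermiteWeight ha)) p n * k₀ = 1)
    (hk₁ : sqNorm (moment (hermiteWeight ha)) p (n + 1) * k₁ = 1)
    (hk₂ : k₂ * sqNorm (moment (hermiteWeight ha)) p (n + 2) = 1) :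
    (2 * (n + 1)) • k₁ -
        (2 * (n + 2)) • (k₂ * sqNorm (moment (hermiteWeight ha)) p (n + 1) * k₀) +
      k₂ * a * sqNorm (moment (hermiteWeight ha)) p (n + 2) * star a * k₀ - star a * k₀ * a = 0 :=
  have hint := integrable_pow_smul_hermiteWeight ha
  hp.sqNorm_recursion (isSelfAdjoint_moment (isSelfAdjoint_hermiteWeight ha))
    (two_nsmul_moment_succ hint (hasDerivAt_hermiteWeight ha))
    (mul_moment hint (mul_hermiteWeight_of_sl2 ha had hha)) n hk₀ hk₁ hk₂

end HermiteWeight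

section HermiteMatrices

open scoped Matrix.Norms.L2Operator

variable {N : ℕ} {α : Fin N → ℝ}

theorem Amat_apply (j k : Fin N) :
    Amat N α j k = if (j : ℕ) = k + 1 then ((2 * α j / α k : ℝ) : ℂ) else 0 :=
  rfl

theorem Amat_pow_apply (hα : ∀ j, α j ≠ 0) (m : ℕ) (j k : Fin N) :
    (Amat N α ^ m) j k =
      if (j : ℕ) = k + m then ((2 ^ m * (α j / α k) : ℝ) : ℂ) else 0 := by
  induction m generalizing j with
  | zero =>
    rcases eq_or_ne j k with rfl | hjk
    · simp [div_self (hα j)]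
    · simp [hjk, Fin.val_ne_of_ne hjk]
  | succ m ih =>
    rw [pow_succ', Matrix.mul_apply]
    simp only [ih, Amat_apply]
    split_ifs with hjk
    · rw [Finset.sum_eq_single ⟨k + m, by omega⟩]
      · have := hα ⟨k + m, by omega⟩
        rw [if_pos (by simpa [add_assoc] using hjk), if_pos rfl, ← Complex.ofReal_mul, pow_succ']
        congr 1
        field_simp
      · intro l _ hl
        rw [if_neg (fun h : (l : ℕ) = k + m ↦ hl (Fin.ext h)), mul_zero]
      · simp
    · refine Finset.sum_eq_zero fun l _ ↦ ?_
      split_ifs <;> first | omega | simp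

theorem Amat_pow_eq_zero (hα : ∀ j, α j ≠ 0) : Amat N α ^ N = 0 := by
  ext j k
  rw [Amat_pow_apply hα, if_neg (by omega), Matrix.zero_apply]

theorem Lmat_eq_nilpotentEval (hα : ∀ j, α j ≠ 0) (x : ℝ) :
    Lmat N α x = nilpotentEval (Amat_pow_eq_zero hα) (hermiteSeries x) := by
  ext j k
  rw [nilpotentEval_eq_sum, Matrix.sum_apply]
  simp only [Matrix.smul_apply, Amat_pow_apply hα, Lmat, Matrix.of_apply, hermiteSeries,
    PowerSeries.coeff_mk]
  split_ifs with hkj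
  · rw [Finset.sum_eq_single ((j : ℕ) - k)]
    · rw [if_pos (by omega), Complex.real_smul, ← Complex.ofReal_mul]
      congr 1
      field_simp
    · intro m _ hm
      rw [if_neg (by omega), smul_zero]
    · intro h
      exact absurd (mem_range.2 (by omega)) h
  · exact (Finset.sum_eq_zero fun m _ ↦ by rw [if_neg (by omega), smul_zero]).symm

theorem hermW_eq_hermiteWeight (hα : ∀ j, α j ≠ 0) :
    hermW N α = hermiteWeight (Amat_pow_eq_zero hα) := by
  ext1 x
  rw [hermW, hermiteWeight, Lmat_eq_nilpotentEval hα, star_eq_conjTranspose]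

theorem matInt_eq_integral {F : ℝ → Matrix (Fin N) (Fin N) ℂ} (hF : Integrable F) :
    matInt N F = ∫ x, F x := by
  ext i j
  exact ((Matrix.entryLinearMap ℝ ℂ i j).toContinuousLinearMap.integral_comp_comm hF)

/-- The special choice of parameters, in 0-based indices, which makes `A` and `A*` generate a copy
of `sl₂`. -/
def IsSl2Parameter (α : Fin N → ℝ) : Prop :=
  ∀ j k : Fin N, (j : ℕ) = k + 1 → 2 * α j / α k = √((j : ℕ) * (N - (j : ℕ)))

theorem Amat_apply_mul_star_self (hα : IsSl2Parameter α) {j k : Fin N} (hjk : (j : ℕ) = k + 1) :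
    Amat N α j k * star (Amat N α j k) = (j : ℕ) * (N - (j : ℕ)) := by
  have hnonneg : (0 : ℝ) ≤ (j : ℕ) * (N - (j : ℕ)) :=
    mul_nonneg j.val.cast_nonneg (sub_nonneg.2 (Nat.cast_le.2 j.is_lt.le))
  rw [Amat_apply, if_pos hjk, hα j k hjk, Complex.star_def, Complex.conj_ofReal,
    ← Complex.ofReal_mul, Real.mul_self_sqrt hnonneg]
  push_cast
  rfl

theorem Amat_mul_star_Amat (hα : IsSl2Parameter α) :
    Amat N α * star (Amat N α) = diagonal fun j : Fin N ↦ ((j : ℕ) * (N - (j : ℕ)) : ℂ) := by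
  ext j k
  rw [Matrix.mul_apply]
  simp only [star_apply]
  rcases eq_or_ne j k with rfl | hjk
  · rw [diagonal_apply_eq]
    rcases Nat.eq_zero_or_pos (j : ℕ) with hj | hj
    · rw [hj, Nat.cast_zero, zero_mul]
      exact Finset.sum_eq_zero fun l _ ↦ by rw [Amat_apply, if_neg (by omega), zero_mul]
    · rw [Finset.sum_eq_single ⟨j - 1, by omega⟩]
      · exact Amat_apply_mul_star_self hα (Nat.sub_add_cancel hj).symm
      · intro l _ hl
        rw [Amat_apply, if_neg (fun h ↦ hl (Fin.ext (Nat.eq_sub_of_add_eq h.symm))), zero_mul]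
      · exact fun h ↦ absurd (mem_univ _) h
  · rw [diagonal_apply_ne _ hjk]
    refine Finset.sum_eq_zero fun l _ ↦ ?_
    simp only [Amat_apply]
    split_ifs with hj hk
    · exact absurd (Fin.ext (hj.trans hk.symm)) hjk
    · rw [star_zero, mul_zero]
    · rw [zero_mul]
    · rw [zero_mul]

theorem star_Amat_mul_Amat (hα : IsSl2Parameter α) :
    star (Amat N α) * Amat N α =
      diagonal fun j : Fin N ↦ (((j : ℕ) + 1) * (N - ((j : ℕ) + 1)) : ℂ) := by
  ext j k
  rw [Matrix.mul_apply]
  simp only [star_apply]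
  rcases eq_or_ne j k with rfl | hjk
  · rw [diagonal_apply_eq]
    rcases (Nat.succ_le_of_lt j.is_lt).eq_or_lt with hj | hj
    · have hN : (N : ℂ) = (j : ℕ) + 1 := by rw [← Nat.cast_succ, hj]
      rw [hN, sub_self, mul_zero]
      exact Finset.sum_eq_zero fun l _ ↦ by rw [Amat_apply, if_neg (by omega), mul_zero]
    · rw [Finset.sum_eq_single ⟨j + 1, hj⟩]
      · rw [mul_comm, Amat_apply_mul_star_self hα rfl, Nat.cast_succ]
      · intro l _ hl
        rw [Amat_apply, if_neg (fun h ↦ hl (Fin.ext h)), mul_zero]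
      · exact fun h ↦ absurd (mem_univ _) h
  · rw [diagonal_apply_ne _ hjk]
    refine Finset.sum_eq_zero fun l _ ↦ ?_
    simp only [Amat_apply]
    split_ifs with hj hk
    · exact absurd (Fin.ext (Nat.succ_injective (hj.symm.trans hk))) hjk
    · rw [mul_zero]
    · rw [star_zero, zero_mul]
    · rw [mul_zero]

theorem Amat_commutator_star (hα : IsSl2Parameter α) :
    Amat N α * star (Amat N α) - star (Amat N α) * Amat N α =
      diagonal fun j : Fin N ↦ 2 * ((j : ℕ) : ℂ) + (1 - N) := by
  rw [Amat_mul_star_Amat hα, star_Amat_mul_Amat hα, diagonal_sub]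
  congr with j
  ring

theorem diagonal_commutator_Amat (c : ℂ) :
    (diagonal fun j : Fin N ↦ 2 * ((j : ℕ) : ℂ) + c) * Amat N α -
      Amat N α * diagonal (fun j : Fin N ↦ 2 * ((j : ℕ) : ℂ) + c) = 2 * Amat N α := by
  ext j k
  rw [Matrix.sub_apply, diagonal_mul, mul_diagonal, two_mul (Amat N α), Matrix.add_apply,
    Amat_apply]
  split_ifs with hjk
  · rw [hjk]
    push_cast
    ring
  · simp

theorem IsMonicMatPoly.exists_polynomial {n : ℕ} {f : ℝ → Matrix (Fin N) (Fin N) ℂ}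
    (hf : IsMonicMatPoly N n f) :
    ∃ F : Polynomial (Matrix (Fin N) (Fin N) ℂ), F.natDegree ≤ n ∧ F.coeff n = 1 ∧
      ∀ x : ℝ, f x = F.eval (algebraMap ℝ _ x) := by
  obtain ⟨c, hc, hfc⟩ := hf
  refine ⟨∑ k ∈ range (n + 1), Polynomial.monomial k (c k), ?_, ?_, fun x ↦ ?_⟩
  · exact Polynomial.natDegree_sum_le_of_forall_le _ _ fun k hk ↦
      (Polynomial.natDegree_monomial_le _).trans (Nat.lt_succ_iff.1 (mem_range.1 hk))
  · simp [Polynomial.coeff_monomial, hc]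
  · rw [hfc, Polynomial.eval_finsetSum]
    refine Finset.sum_congr rfl fun k _ ↦ ?_
    rw [Polynomial.eval_monomial, ← map_pow, ← Algebra.commutes, ← Algebra.smul_def,
      ← Complex.ofReal_pow, Complex.coe_smul]

theorem matIP_eval {W : ℝ → Matrix (Fin N) (Fin N) ℂ}
    (hint : ∀ k, Integrable fun x : ℝ ↦ x ^ k • W x)
    (F G : Polynomial (Matrix (Fin N) (Fin N) ℂ)) :
    matIP N W (fun x ↦ F.eval (algebraMap ℝ _ x)) (fun x ↦ G.eval (algebraMap ℝ _ x)) =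
      momentForm (moment W) F G :=
  (matInt_eq_integral (integrable_eval_mul_mul_star_eval hint F G)).trans
    (integral_eval_mul_mul_star_eval hint F G)

theorem exists_isMonicOrthogonal_of_matIP (hα : ∀ j, α j ≠ 0)
    {P : ℕ → ℝ → Matrix (Fin N) (Fin N) ℂ} (hmonic : ∀ n, IsMonicMatPoly N n (P n))
    (horth : ∀ n m, n ≠ m → matIP N (hermW N α) (P n) (P m) = 0) :
    ∃ p, IsMonicOrthogonal (moment (hermW N α)) p ∧
      ∀ n, matIP N (hermW N α) (P n) (P n) = sqNorm (moment (hermW N α)) p n := by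
  choose p hdeg hcoeff hp using fun n ↦ (hmonic n).exists_polynomial
  have hint (k : ℕ) : Integrable fun x : ℝ ↦ x ^ k • hermW N α x := by
    rw [hermW_eq_hermiteWeight hα]
    exact integrable_pow_smul_hermiteWeight _ k
  have hIP (m n : ℕ) :
      matIP N (hermW N α) (P m) (P n) = momentForm (moment (hermW N α)) (p m) (p n) := by
    rw [funext (hp m), funext (hp n), matIP_eval hint]
  exact ⟨p, ⟨hdeg, hcoeff, fun m n hmn ↦ by rw [← hIP, horth m n hmn]⟩, fun n ↦ hIP n n⟩

theorem IsMonicOrthogonal.hermW_sqNorm_recursion (hα : ∀ j, α j ≠ 0) (hsl2 : IsSl2Parameter α)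
    {p : ℕ → Polynomial (Matrix (Fin N) (Fin N) ℂ)}
    (hp : IsMonicOrthogonal (moment (hermW N α)) p)
    (hdet : ∀ n, IsUnit (sqNorm (moment (hermW N α)) p n).det) (n : ℕ) :
    (2 * (n + 1) : ℂ) • (sqNorm (moment (hermW N α)) p (n + 1))⁻¹ -
        (2 * (n + 2) : ℂ) • ((sqNorm (moment (hermW N α)) p (n + 2))⁻¹ *
          sqNorm (moment (hermW N α)) p (n + 1) * (sqNorm (moment (hermW N α)) p n)⁻¹) +
      (sqNorm (moment (hermW N α)) p (n + 2))⁻¹ * Amat N α *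
        sqNorm (moment (hermW N α)) p (n + 2) * (Amat N α)ᴴ *
        (sqNorm (moment (hermW N α)) p n)⁻¹ -
      (Amat N α)ᴴ * (sqNorm (moment (hermW N α)) p n)⁻¹ * Amat N α = 0 := by
  rw [hermW_eq_hermiteWeight hα] at hp hdet ⊢
  have h := hp.hermiteWeight_sqNorm_recursion (Amat_pow_eq_zero hα) (Amat_commutator_star hsl2)
    (diagonal_commutator_Amat _) n (mul_nonsing_inv _ (hdet n))
    (mul_nonsing_inv _ (hdet (n + 1))) (nonsing_inv_mul _ (hdet (n + 2)))
  rw [← Nat.cast_smul_eq_nsmul ℂ, ← Nat.cast_smul_eq_nsmul ℂ] at h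
  exact_mod_cast h

end HermiteMatrices

/-- **Second recursion for the squared norms** (Corollary 6.4 of the paper):
with the special parameters, the squared norms satisfy
`2(n+1)ℋ(n+1)⁻¹ − 2(n+2)ℋ(n+2)⁻¹ℋ(n+1)ℋ(n)⁻¹ + ℋ(n+2)⁻¹Aℋ(n+2)A*ℋ(n)⁻¹
 − A*ℋ(n)⁻¹A = 0`. -/
theorem hermite_norms_second_recursion
    (N : ℕ) (hN : 1 ≤ N) (α : Fin N → ℝ) (hα : ∀ j, 0 < α j)
    (P : ℕ → ℝ → Matrix (Fin N) (Fin N) ℂ)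
    (hPmonic : ∀ n, IsMonicMatPoly N n (P n))
    (hPorth : ∀ n m, n ≠ m → matIP N (hermW N α) (P n) (P m) = 0)
    (hHpos : ∀ n, (matIP N (hermW N α) (P n) (P n)).PosDef)
    (hspec : ∀ j k : Fin N, (j : ℕ) = (k : ℕ) + 1 →
      2 * α j / α k = Real.sqrt ((j : ℕ) * (N - (j : ℕ))))
    :
    ∀ n : ℕ,
      ((2 * (n + 1) : ℂ)) • (matIP N (hermW N α) (P (n + 1)) (P (n + 1)))⁻¹ -
        ((2 * (n + 2) : ℂ)) •
          ((matIP N (hermW N α) (P (n + 2)) (P (n + 2)))⁻¹ *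
            matIP N (hermW N α) (P (n + 1)) (P (n + 1)) *
            (matIP N (hermW N α) (P n) (P n))⁻¹) +
        (matIP N (hermW N α) (P (n + 2)) (P (n + 2)))⁻¹ * Amat N α *
          matIP N (hermW N α) (P (n + 2)) (P (n + 2)) * (Amat N α)ᴴ *
          (matIP N (hermW N α) (P n) (P n))⁻¹ -
        (Amat N α)ᴴ * (matIP N (hermW N α) (P n) (P n))⁻¹ * Amat N α = 0 := by
  have hα₀ (j : Fin N) : α j ≠ 0 := (hα j).ne'
  obtain ⟨p, hp, hnorm⟩ := exists_isMonicOrthogonal_of_matIP hα₀ hPmonic hPorth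
  have hdet (n : ℕ) : IsUnit (matIP N (hermW N α) (P n) (P n)).det :=
    (isUnit_iff_isUnit_det _).1 (hHpos n).isUnit
  simp only [hnorm] at hdet ⊢
  exact hp.hermW_sqNorm_recursion hα₀ hspec hdet
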